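/- For a partition λ ⊆ n^m with p boxes, s_λ(1^m) · s_{λ'}(1^n) = (∏_{□∈λ}(m + c(□))) · (∏_{□∈ n^m ∖ λ}(m + c(□))) / (H_λ · H_{λ̄}) = H_{n^m}/(H_λ · H_{λ̄}). -/

import Mathlib

open YoungDiagram Finset

/-- The rectangular Young diagram with `m` rows and `n` columns. -/
def rect (m n : ℕ) : YoungDiagram where
  cells := Finset.range m ×ˢ Finset.range n
  isLowerSet := by
    rintro ⟨a1, a2⟩ ⟨b1, b2⟩ ⟨h1, h2⟩ hb
    simp only [Finset.coe_product, Set.mem_prod, Finset.mem_coe, Finset.mem_range] at *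
    exact ⟨lt_of_le_of_lt h1 hb.1, lt_of_le_of_lt h2 hb.2⟩

/-- The 180°-rotated complement of a Young diagram `μ` inside the rectangle with
`m` rows and `n` columns: its row lengths are `n - μ.rowLen (m-1-i)`. -/
def complement (m n : ℕ) (μ : YoungDiagram) : YoungDiagram where
  cells := (Finset.range m ×ˢ Finset.range n).filter fun p => p.2 < n - μ.rowLen (m - 1 - p.1)
  isLowerSet := by
    rintro ⟨a1, a2⟩ ⟨b1, b2⟩ ⟨h1, h2⟩ hb
    simp only [Finset.coe_filter, Set.mem_setOf_eq, Finset.mem_product, Finset.mem_range] at *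
    refine ⟨⟨lt_of_le_of_lt h1 hb.1.1, lt_of_le_of_lt h2 hb.1.2⟩, ?_⟩
    calc b2 ≤ a2 := h2
      _ < n - μ.rowLen (m - 1 - a1) := hb.2
      _ ≤ n - μ.rowLen (m - 1 - b1) :=
          Nat.sub_le_sub_left (μ.rowLen_anti _ _ (Nat.sub_le_sub_left h1 _)) n

/-- The hook length of the cell `c` in the Young diagram `μ` (arm + leg + 1). -/
def hookLength (μ : YoungDiagram) (c : ℕ × ℕ) : ℕ :=
  (μ.rowLen c.1 - c.2) + (μ.colLen c.2 - c.1) - 1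

/-- The product of all hook lengths of `μ`. -/
def hookProd (μ : YoungDiagram) : ℕ := ∏ c ∈ μ.cells, hookLength μ c

/-- The number of semistandard Young tableaux of shape `μ` with entries in `{0, …, k-1}`;
this equals `s_μ(1^k) = dim S^μ(ℂ^k)`. -/
noncomputable def ssytCount (μ : YoungDiagram) (k : ℕ) : ℕ :=
  Set.ncard {T : SemistandardYoungTableau μ | ∀ i j, (i, j) ∈ μ → T i j < k}

/-- `T : ℕ × ℕ → ℕ` is a standard Young tableau of shape `μ` (with entries `0, …, |μ|-1`):
it is a bijection from the cells of `μ` to `{0, …, |μ|-1}`, strictly increasing along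
rows and columns, and zero outside `μ`. -/
def IsSyt (μ : YoungDiagram) (T : ℕ × ℕ → ℕ) : Prop :=
  Set.BijOn T (μ.cells : Set (ℕ × ℕ)) (Finset.range μ.card : Set ℕ) ∧
  (∀ i j, (i, j + 1) ∈ μ → T (i, j) < T (i, j + 1)) ∧
  (∀ i j, (i + 1, j) ∈ μ → T (i, j) < T (i + 1, j)) ∧
  (∀ c, c ∉ μ → T c = 0)

/-- The number of standard Young tableaux of shape `μ`, i.e. `f^μ`. -/
noncomputable def sytCount (μ : YoungDiagram) : ℕ := Set.ncard {T | IsSyt μ T}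

/-!
Deleting the largest letter from a semistandard tableau leaves a tableau whose shape interlaces the
original one, and the determinant `det (L i).choose j` obeys the same recursion in the beta-numbers
of the shape.  Hence `s_μ(1^k)` is a Vandermonde product in the beta-numbers divided by
`0! 1! ⋯ (k - 1)!`.  The hook lengths of a row together with the differences between its beta-number
`β` and the later ones are exactly `1, …, β`, which turns the Vandermonde product into the
hook–content formula.

Complementation in the rectangle reflects the beta-numbers, so `s_{λ̄}(1^m) = s_λ(1^m)`.  The
theorem is therefore the product of the hook–content formulas for `λ` and for the complement of
`λ'`, while the formula for the rectangle itself, the complement of `⊥`, evaluates `H_{n^m}`.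
-/

namespace HookContent

section RowLengths

variable {μ ν : YoungDiagram} {k i j : ℕ}

theorem rowLen_eq_iff {a : ℕ} : μ.rowLen i = a ↔ ∀ j, (i, j) ∈ μ ↔ j < a := by
  simp only [mem_iff_lt_rowLen]
  exact ⟨fun h _ => by rw [h], fun h => eq_of_forall_lt_iff h⟩

theorem fst_lt_of_mem (hμ : μ.colLen 0 ≤ k) (h : (i, j) ∈ μ) : i < k :=
  (mem_iff_lt_colLen.1 (μ.up_left_mem le_rfl j.zero_le h)).trans_le hμ

theorem rowLen_eq_zero (hμ : μ.colLen 0 ≤ k) (hi : k ≤ i) : μ.rowLen i = 0 :=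
  rowLen_eq_iff.2 fun j =>
    iff_of_false (fun h => (fst_lt_of_mem hμ h).not_ge hi) j.not_lt_zero

theorem eq_of_rowLen_eq (h : ∀ i, μ.rowLen i = ν.rowLen i) : μ = ν := by
  ext ⟨i, j⟩
  rw [mem_cells, mem_cells, mem_iff_lt_rowLen, mem_iff_lt_rowLen, h]

theorem exists_rowLen_eq {f : Fin k → ℕ} (hf : Antitone f) :
    ∃ μ : YoungDiagram, μ.colLen 0 ≤ k ∧ ∀ i : Fin k, μ.rowLen i = f i := by
  let μ := ofRowLens (List.ofFn f) hf.sortedGE_ofFn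
  have mem_μ (i j : ℕ) : (i, j) ∈ μ ↔ ∃ h : i < k, j < f ⟨i, h⟩ := by simp [μ, mem_ofRowLens]
  refine ⟨μ, ?_, fun i => rowLen_eq_iff.2 fun j => by simp [mem_μ]⟩
  rw [← not_lt, ← mem_iff_lt_colLen, mem_μ]
  simp

theorem prod_cells_eq_prod_rows {M : Type*} [CommMonoid M] (hμ : μ.colLen 0 ≤ k)
    (f : ℕ × ℕ → M) :
    ∏ c ∈ μ.cells, f c = ∏ i : Fin k, ∏ j ∈ range (μ.rowLen i), f (i, j) := by
  rw [Fin.prod_univ_eq_prod_range fun i => ∏ j ∈ range (μ.rowLen i), f (i, j)]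
  refine prod_finset_product _ _ _ fun c => ?_
  rw [mem_cells, mem_range, mem_range, ← mem_iff_lt_rowLen]
  exact ⟨fun h => ⟨fst_lt_of_mem hμ h, h⟩, And.right⟩

theorem prod_cells_transpose {M : Type*} [CommMonoid M] (f : ℕ × ℕ → M) :
    ∏ c ∈ μ.transpose.cells, f c = ∏ c ∈ μ.cells, f c.swap := by
  refine prod_nbij' Prod.swap Prod.swap ?_ ?_ ?_ ?_ ?_ <;> simp

end RowLengths

section Interlacing

variable {μ ν : YoungDiagram} {k i j : ℕ}

/-- The row lengths of `ν` interlace those of `μ`; equivalently, `ν` is contained in `μ` and the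
skew shape `μ / ν` is a horizontal strip. -/
def Interlaces (ν μ : YoungDiagram) : Prop :=
  ∀ i, μ.rowLen (i + 1) ≤ ν.rowLen i ∧ ν.rowLen i ≤ μ.rowLen i

theorem interlaces_iff :
    Interlaces ν μ ↔ ν ≤ μ ∧ ∀ i j, (i + 1, j) ∈ μ → (i, j) ∈ ν := by
  simp only [mem_iff_lt_rowLen]
  refine ⟨fun h => ⟨fun c hc => ?_, fun i j hj => hj.trans_le (h i).1⟩, fun h i => ⟨?_, ?_⟩⟩
  · exact mem_iff_lt_rowLen.2 ((mem_iff_lt_rowLen.1 hc).trans_le (h c.1).2)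
  · exact le_of_forall_lt (h.2 i)
  · exact le_of_forall_lt fun j hj => mem_iff_lt_rowLen.1 (h.1 (mem_iff_lt_rowLen.2 hj))

theorem finite_interlaces (μ : YoungDiagram) : {ν | Interlaces ν μ}.Finite := by
  have cells_injective : Function.Injective YoungDiagram.cells := fun _ _ h => YoungDiagram.ext h
  refine (μ.cells.powerset.finite_toSet.preimage cells_injective.injOn).subset fun ν hν => ?_
  simpa using (interlaces_iff.1 hν).1

end Interlacing

section Branching

variable {μ ν : YoungDiagram} {k i j : ℕ}

/-- The semistandard tableaux of shape `μ` with entries in `{0, …, k - 1}`, counted by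
`ssytCount μ k`. -/
def boundedTableaux (μ : YoungDiagram) (k : ℕ) : Set (SemistandardYoungTableau μ) :=
  {T | ∀ i j, (i, j) ∈ μ → T i j < k}

theorem finite_boundedTableaux (μ : YoungDiagram) (k : ℕ) : (boundedTableaux μ k).Finite := by
  rw [← Set.finite_coe_iff]
  refine Finite.of_injective (β := μ.cells → Fin k)
    (fun T c => ⟨T.1 c.1.1 c.1.2, T.2 _ _ (mem_cells _ |>.1 c.2)⟩) fun T T' h => ?_
  ext i j
  by_cases hc : (i, j) ∈ μ
  · simpa using congrFun h ⟨(i, j), (mem_cells _).2 hc⟩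
  · rw [T.1.zeros hc, T'.1.zeros hc]

theorem le_entry (T : SemistandardYoungTableau μ) (h : (i, j) ∈ μ) : i ≤ T i j := by
  induction i with
  | zero => exact Nat.zero_le _
  | succ i ih =>
    exact (ih (μ.up_left_mem i.le_succ le_rfl h)).trans_lt (T.col_strict i.lt_succ_self h)

theorem ssytCount_eq_zero (hμ : k < μ.colLen 0) : ssytCount μ k = 0 := by
  have hk : (k, 0) ∈ μ := mem_iff_lt_colLen.2 hμ
  refine (Set.ncard_eq_zero (finite_boundedTableaux μ k)).2 ?_
  exact Set.eq_empty_of_forall_notMem fun T hT => (hT k 0 hk).not_ge (le_entry T hk)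

theorem ssytCount_bot (k : ℕ) : ssytCount ⊥ k = 1 := by
  refine Set.ncard_eq_one.2 ⟨default, Set.eq_singleton_iff_unique_mem.2 ⟨?_, fun T _ => ?_⟩⟩
  · exact fun _ _ h => absurd h (notMem_bot _)
  · ext i j
    rw [T.zeros (notMem_bot _), SemistandardYoungTableau.zeros _ (notMem_bot _)]

/-- The shape formed by the entries of `T` that are smaller than `k`. -/
def shapeBelow (T : SemistandardYoungTableau μ) (k : ℕ) : YoungDiagram where
  cells := μ.cells.filter fun c => T c.1 c.2 < k
  isLowerSet := by
    rintro ⟨i, j⟩ ⟨i', j'⟩ ⟨hi, hj⟩ hc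
    simp only [coe_filter, Set.mem_ofPred_eq, mem_cells] at hc ⊢
    exact ⟨μ.up_left_mem hi hj hc.1,
      ((T.col_weak hi (μ.up_left_mem le_rfl hj hc.1)).trans (T.row_weak_of_le hj hc.1)).trans_lt
        hc.2⟩

theorem mem_shapeBelow {T : SemistandardYoungTableau μ} :
    (i, j) ∈ shapeBelow T k ↔ (i, j) ∈ μ ∧ T i j < k := by
  rw [← mem_cells, shapeBelow, mem_filter, mem_cells]

theorem interlaces_shapeBelow {T : SemistandardYoungTableau μ}
    (hT : T ∈ boundedTableaux μ (k + 1)) :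
    Interlaces (shapeBelow T k) μ := by
  refine interlaces_iff.2 ⟨fun c hc => (mem_shapeBelow.1 hc).1, fun i j hc => ?_⟩
  have entry_lt : T i j < T (i + 1) j := T.col_strict i.lt_succ_self hc
  exact mem_shapeBelow.2 ⟨μ.up_left_mem i.le_succ le_rfl hc,
    entry_lt.trans_le (Nat.lt_succ_iff.1 (hT _ _ hc))⟩

theorem entry_eq_of_notMem_shapeBelow {T : SemistandardYoungTableau μ}
    (hT : T ∈ boundedTableaux μ (k + 1)) (hc : (i, j) ∈ μ) (h : (i, j) ∉ shapeBelow T k) :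
    T i j = k :=
  le_antisymm (Nat.lt_succ_iff.1 (hT i j hc)) (not_lt.1 fun hlt => h (mem_shapeBelow.2 ⟨hc, hlt⟩))

/-- The restriction of a tableau to a smaller shape, zero outside it. -/
def restrictTableau (h : ν ≤ μ) (T : SemistandardYoungTableau μ) : SemistandardYoungTableau ν where
  entry i j := if (i, j) ∈ ν then T i j else 0
  row_weak' {i j j'} hj hc := by
    rw [if_pos hc, if_pos (ν.up_left_mem le_rfl hj.le hc)]
    exact T.row_weak hj (h hc)
  col_strict' {i i' j} hi hc := by
    rw [if_pos hc, if_pos (ν.up_left_mem hi.le le_rfl hc)]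
    exact T.col_strict hi (h hc)
  zeros' hc := if_neg hc

theorem restrictTableau_apply (h : ν ≤ μ) (T : SemistandardYoungTableau μ) (hc : (i, j) ∈ ν) :
    restrictTableau h T i j = T i j :=
  if_pos hc

/-- The tableau of shape `μ` obtained from a tableau `U` of an interlacing shape `ν`, with entries
smaller than `k`, by filling the horizontal strip `μ / ν` with `k`. -/
def extendTableau (h : Interlaces ν μ) {U : SemistandardYoungTableau ν}
    (hU : U ∈ boundedTableaux ν k) : SemistandardYoungTableau μ where
  entry i j := if (i, j) ∈ ν then U i j else if (i, j) ∈ μ then k else 0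
  row_weak' {i j j'} hj hc := by
    have hc₀ : (i, j) ∈ μ := μ.up_left_mem le_rfl hj.le hc
    by_cases hν : (i, j') ∈ ν
    · rw [if_pos hν, if_pos (ν.up_left_mem le_rfl hj.le hν)]
      exact U.row_weak hj hν
    · rw [if_neg hν, if_pos hc, if_pos hc₀]
      split_ifs with hν₀
      exacts [(hU _ _ hν₀).le, le_rfl]
  col_strict' {i i' j} hi hc := by
    have hν₀ : (i, j) ∈ ν := (interlaces_iff.1 h).2 i j (μ.up_left_mem hi le_rfl hc)
    rw [if_pos hν₀, if_pos hc]
    split_ifs with hν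
    exacts [U.col_strict hi hν, hU _ _ hν₀]
  zeros' hc := by
    rw [if_neg fun hν => hc ((interlaces_iff.1 h).1 hν), if_neg hc]

section ExtendTableau

variable (h : Interlaces ν μ) {U : SemistandardYoungTableau ν} (hU : U ∈ boundedTableaux ν k)
include h hU

theorem extendTableau_apply_of_mem (hν : (i, j) ∈ ν) : extendTableau h hU i j = U i j :=
  if_pos hν

theorem extendTableau_apply_of_notMem (hν : (i, j) ∉ ν) (hc : (i, j) ∈ μ) :
    extendTableau h hU i j = k :=
  (if_neg hν).trans (if_pos hc)

theorem extendTableau_mem_boundedTableaux : extendTableau h hU ∈ boundedTableaux μ (k + 1) := by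
  intro i j hc
  by_cases hν : (i, j) ∈ ν
  · rw [extendTableau_apply_of_mem h hU hν]
    exact (hU i j hν).trans k.lt_succ_self
  · rw [extendTableau_apply_of_notMem h hU hν hc]
    exact k.lt_succ_self

theorem shapeBelow_extendTableau : shapeBelow (extendTableau h hU) k = ν := by
  ext ⟨i, j⟩
  rw [mem_cells, mem_cells, mem_shapeBelow]
  by_cases hν : (i, j) ∈ ν
  · simp [hν, extendTableau_apply_of_mem h hU hν, hU i j hν, (interlaces_iff.1 h).1 hν]
  · simp +contextual [hν, extendTableau_apply_of_notMem h hU hν]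

theorem restrictTableau_extendTableau :
    restrictTableau (interlaces_iff.1 h).1 (extendTableau h hU) = U := by
  ext i j
  by_cases hν : (i, j) ∈ ν
  · rw [restrictTableau_apply _ _ hν, extendTableau_apply_of_mem h hU hν]
  · rw [U.zeros hν, SemistandardYoungTableau.zeros _ hν]

end ExtendTableau

theorem bijOn_restrictTableau (h : Interlaces ν μ) :
    Set.BijOn (restrictTableau (interlaces_iff.1 h).1)
      {T ∈ boundedTableaux μ (k + 1) | shapeBelow T k = ν} (boundedTableaux ν k) := by
  refine ⟨?_, ?_, fun U hU => ⟨extendTableau h hU,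
    ⟨extendTableau_mem_boundedTableaux h hU, shapeBelow_extendTableau h hU⟩,
    restrictTableau_extendTableau h hU⟩⟩
  · rintro T ⟨-, rfl⟩ i j hc
    rw [restrictTableau_apply _ _ hc]
    exact (mem_shapeBelow.1 hc).2
  · rintro T ⟨hT, rfl⟩ T' ⟨hT', hTT'⟩ hres
    ext i j
    by_cases hν : (i, j) ∈ shapeBelow T k
    · rw [← restrictTableau_apply (interlaces_iff.1 h).1 T hν, hres, restrictTableau_apply _ T' hν]
    by_cases hc : (i, j) ∈ μ
    · rw [entry_eq_of_notMem_shapeBelow hT hc hν,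
        entry_eq_of_notMem_shapeBelow hT' hc (hTT' ▸ hν)]
    · rw [T.zeros hc, T'.zeros hc]

theorem ssytCount_succ (μ : YoungDiagram) (k : ℕ) :
    ssytCount μ (k + 1) = ∑ ν ∈ (finite_interlaces μ).toFinset, ssytCount ν k := by
  classical
  have card_fiber {ν : YoungDiagram} (h : Interlaces ν μ) :
      #{T ∈ (finite_boundedTableaux μ (k + 1)).toFinset | shapeBelow T k = ν} = ssytCount ν k := by
    rw [← Set.ncard_coe_finset, coe_filter]
    simp only [Set.Finite.mem_toFinset]
    exact (bijOn_restrictTableau h).ncard_eq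
  calc ssytCount μ (k + 1) = #(finite_boundedTableaux μ (k + 1)).toFinset :=
        Set.ncard_eq_toFinset_card _ _
    _ = ∑ ν ∈ (finite_interlaces μ).toFinset,
          #{T ∈ (finite_boundedTableaux μ (k + 1)).toFinset | shapeBelow T k = ν} :=
        card_eq_sum_card_fiberwise fun T hT => by
          simpa using interlaces_shapeBelow (by simpa using hT)
    _ = ∑ ν ∈ (finite_interlaces μ).toFinset, ssytCount ν k :=
        sum_congr rfl fun ν hν => card_fiber (by simpa using hν)

end Branching

section ChooseDet

variable {k : ℕ}

/-- The determinant of the matrix of binomial coefficients `(L i).choose j`, a rescaled Vandermonde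
determinant that counts semistandard tableaux. -/
def chooseDet (L : Fin k → ℕ) : ℤ :=
  (Matrix.of fun i j : Fin k => ((L i).choose j : ℤ)).det

theorem prod_factorial_mul_chooseDet (L : Fin k → ℕ) :
    (∏ i : Fin k, ((i : ℕ).factorial : ℤ)) * chooseDet L
      = ∏ i : Fin k, ∏ j ∈ Ioi i, ((L j : ℤ) - L i) := by
  rw [← Matrix.det_vandermonde fun i => (L i : ℤ),
    Matrix.det_eval_matrixOfPolynomials_eq_det_vandermonde _ (fun i => descPochhammer ℤ i)
      (fun i => descPochhammer_natDegree ℤ i) (fun i => monic_descPochhammer ℤ i),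
    chooseDet, ← Matrix.det_mul_row]
  congr 1
  ext i j
  rw [Matrix.of_apply, Matrix.of_apply, Matrix.of_apply, descPochhammer_eval_eq_descFactorial,
    Nat.descFactorial_eq_factorial_mul_choose, Nat.cast_mul]

theorem sum_Ico_choose {a b : ℕ} (h : a ≤ b) (j : ℕ) :
    ∑ x ∈ Ico a b, (x.choose j : ℤ) = b.choose (j + 1) - a.choose (j + 1) := by
  rw [← sum_Ico_sub (fun x => (x.choose (j + 1) : ℤ)) h]
  exact sum_congr rfl fun x _ => by rw [Nat.choose_succ_succ]; push_cast; ring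

/-- Subtracting from each row the preceding one turns the first column, which is constantly `1`,
into a unit vector. -/
theorem chooseDet_succ_eq_det_sub (L : Fin (k + 1) → ℕ) :
    chooseDet L = (Matrix.of fun i j : Fin k =>
      ((L i.succ).choose (j + 1) : ℤ) - (L i.castSucc).choose (j + 1)).det := by
  let B : Matrix (Fin (k + 1)) (Fin (k + 1)) ℤ := Matrix.of fun i j =>
    Fin.cases ((L 0).choose j : ℤ) (fun i => (L i.succ).choose j - (L i.castSucc).choose j) i
  have det_eq : chooseDet L = B.det :=
    Matrix.det_eq_of_forall_row_eq_smul_add_pred (fun _ => 1) (fun j => by simp [B])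
      fun i j => by simp [B]
  rw [det_eq, Matrix.det_succ_column_zero, Fin.sum_univ_succ]
  simp [B, Matrix.submatrix]

theorem chooseDet_succ {L : Fin (k + 1) → ℕ} (hL : Monotone L) :
    chooseDet L
      = ∑ x ∈ Fintype.piFinset fun i : Fin k => Ico (L i.castSucc) (L i.succ), chooseDet x := by
  have multilinear := (Matrix.detRowAlternating (R := ℤ) (n := Fin k)).map_sum_finset
    (fun _ x j => (x.choose (j : ℕ) : ℤ)) fun i : Fin k => Ico (L i.castSucc) (L i.succ)
  rw [chooseDet_succ_eq_det_sub]
  refine Eq.trans (congrArg Matrix.det ?_) multilinear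
  ext i j
  rw [Matrix.of_apply, Finset.sum_apply, sum_Ico_choose (hL i.castSucc_le_succ)]

end ChooseDet

section BetaNumbers

variable {μ ν : YoungDiagram} {k : ℕ}

/-- The beta-numbers `μ_i + k - 1 - i` of `μ` for `k` rows; they decrease with `i`. -/
def betaNumber (μ : YoungDiagram) (k : ℕ) (i : Fin k) : ℕ :=
  μ.rowLen i + i.rev

theorem betaNumber_strictAnti (μ : YoungDiagram) (k : ℕ) : StrictAnti (betaNumber μ k) :=
  fun i i' h => add_lt_add_of_le_of_lt (μ.rowLen_anti i i' h.le) (Fin.rev_lt_rev.2 h)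

theorem betaNumber_injOn : Set.InjOn (betaNumber · k) {μ | μ.colLen 0 ≤ k} := by
  intro μ hμ ν hν h
  refine eq_of_rowLen_eq fun i => ?_
  by_cases hi : i < k
  · exact Nat.add_right_cancel (congrFun h ⟨i, hi⟩)
  · rw [rowLen_eq_zero hμ (not_lt.1 hi), rowLen_eq_zero hν (not_lt.1 hi)]

theorem interlaces_iff_betaNumber (hμ : μ.colLen 0 ≤ k + 1) (hν : ν.colLen 0 ≤ k) :
    Interlaces ν μ ↔ ∀ i : Fin k, betaNumber μ (k + 1) i.succ ≤ betaNumber ν k i ∧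
      betaNumber ν k i < betaNumber μ (k + 1) i.castSucc := by
  simp only [betaNumber, Fin.val_rev, Fin.val_succ, Fin.val_castSucc]
  refine ⟨fun h i => ?_, fun h i => ?_⟩
  · have := h i
    lia
  · by_cases hi : i < k
    · have := h ⟨i, hi⟩
      lia
    · rw [rowLen_eq_zero hν (not_lt.1 hi), rowLen_eq_zero hμ (by lia)]
      lia

theorem exists_betaNumber_eq {b : Fin k → ℕ} (hb : ∀ i : Fin k,
    betaNumber μ (k + 1) i.succ ≤ b i ∧ b i < betaNumber μ (k + 1) i.castSucc) :
    ∃ ν : YoungDiagram, ν.colLen 0 ≤ k ∧ betaNumber ν k = b := by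
  simp only [betaNumber, Fin.val_rev, Fin.val_succ, Fin.val_castSucc] at hb
  have antitone_sub : Antitone fun i : Fin k => b i - i.rev := by
    refine antitone_iff_forall_lt.2 fun i i' h => ?_
    have := μ.rowLen_anti (i + 1) i' h
    have := hb i
    have := hb i'
    simp only [Fin.val_rev]
    lia
  obtain ⟨ν, hν, rowLen_ν⟩ := exists_rowLen_eq antitone_sub
  refine ⟨ν, hν, funext fun i => ?_⟩
  have := hb i
  rw [betaNumber, rowLen_ν, Fin.val_rev]
  lia

/-- The reversal makes the beta-numbers increasing, as in `chooseDet_succ`. -/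
theorem bijOn_betaNumber_comp_rev (hμ : μ.colLen 0 ≤ k + 1) :
    Set.BijOn (betaNumber · k ∘ Fin.rev) {ν | Interlaces ν μ ∧ ν.colLen 0 ≤ k}
      {x | ∀ i : Fin k, betaNumber μ (k + 1) i.castSucc.rev ≤ x i ∧
        x i < betaNumber μ (k + 1) i.succ.rev} := by
  simp only [Fin.rev_castSucc, Fin.rev_succ]
  refine ⟨?_, ?_, ?_⟩
  · exact fun ν hν i => (interlaces_iff_betaNumber hμ hν.2).1 hν.1 i.rev
  · exact fun ν hν ν' hν' h =>
      betaNumber_injOn hν.2 hν'.2 (Fin.rev_surjective.injective_comp_right h)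
  · intro x hx
    obtain ⟨ν, hν, h⟩ := exists_betaNumber_eq (μ := μ) (b := x ∘ Fin.rev)
      fun i => by simpa using hx i.rev
    refine ⟨ν, ⟨(interlaces_iff_betaNumber hμ hν).2 fun i => ?_, hν⟩, ?_⟩
    · simpa [h] using hx i.rev
    · simp [h, Function.comp_assoc, Fin.rev_involutive.comp_self]

theorem ssytCount_eq_chooseDet (hμ : μ.colLen 0 ≤ k) :
    (ssytCount μ k : ℤ) = chooseDet (betaNumber μ k ∘ Fin.rev) := by
  classical
  induction k generalizing μ with
  | zero =>
    obtain rfl : μ = ⊥ := by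
      ext ⟨i, j⟩
      exact iff_of_false (fun h => (fst_lt_of_mem hμ ((mem_cells _).1 h)).not_ge i.zero_le)
        (notMem_bot (i, j))
    simp [ssytCount_bot, chooseDet]
  | succ k ih =>
    let S := (finite_interlaces μ).toFinset
    have vanish (ν : YoungDiagram) (h : ssytCount ν k ≠ 0) : ν.colLen 0 ≤ k :=
      not_lt.1 fun hk => h (ssytCount_eq_zero hk)
    calc (ssytCount μ (k + 1) : ℤ) = ∑ ν ∈ S with ν.colLen 0 ≤ k, (ssytCount ν k : ℤ) := by
          rw [ssytCount_succ, ← sum_filter_of_ne fun ν _ => vanish ν, Nat.cast_sum]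
      _ = ∑ ν ∈ S with ν.colLen 0 ≤ k, chooseDet (betaNumber ν k ∘ Fin.rev) :=
          sum_congr rfl fun ν hν => ih (mem_filter.1 hν).2
      _ = ∑ x ∈ Fintype.piFinset fun i : Fin k => Ico (betaNumber μ (k + 1) i.castSucc.rev)
            (betaNumber μ (k + 1) i.succ.rev), chooseDet x := by
          have bij : Set.BijOn (betaNumber · k ∘ Fin.rev) (S.filter fun ν => ν.colLen 0 ≤ k)
              (Fintype.piFinset fun i : Fin k => Ico (betaNumber μ (k + 1) i.castSucc.rev)
                (betaNumber μ (k + 1) i.succ.rev)) := by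
            convert! bijOn_betaNumber_comp_rev hμ <;> ext <;> simp [S]
          exact sum_nbij _ (fun _ hν => bij.mapsTo hν) bij.injOn bij.surjOn fun _ _ => rfl
      _ = chooseDet (betaNumber μ (k + 1) ∘ Fin.rev) :=
          (chooseDet_succ ((betaNumber_strictAnti μ (k + 1)).comp Fin.rev_strictAnti).monotone).symm

theorem prod_prod_Ioi_rev {M : Type*} [CommMonoid M] (f : Fin k → Fin k → M) :
    ∏ i : Fin k, ∏ j ∈ Ioi i, f (Fin.rev j) (Fin.rev i) = ∏ i, ∏ j ∈ Ioi i, f i j := by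
  rw [prod_sigma', prod_sigma']
  refine prod_nbij' (fun p => ⟨p.2.rev, p.1.rev⟩) (fun p => ⟨p.2.rev, p.1.rev⟩)
    ?_ ?_ ?_ ?_ ?_ <;> simp

/-- The product of the differences of the beta-numbers, the numerator of the Weyl dimension formula.
The subtraction does not truncate because the beta-numbers decrease. -/
def betaVandermonde (μ : YoungDiagram) (k : ℕ) : ℕ :=
  ∏ i, ∏ r ∈ Ioi i, (betaNumber μ k i - betaNumber μ k r)

theorem prod_factorial_mul_ssytCount (hμ : μ.colLen 0 ≤ k) :
    (∏ i : Fin k, (i : ℕ).factorial) * ssytCount μ k = betaVandermonde μ k := by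
  zify
  rw [ssytCount_eq_chooseDet hμ, prod_factorial_mul_chooseDet, betaVandermonde]
  push_cast
  rw [← prod_prod_Ioi_rev fun i r => ((betaNumber μ k i - betaNumber μ k r : ℕ) : ℤ)]
  refine prod_congr rfl fun i _ => prod_congr rfl fun r hr => ?_
  rw [Nat.cast_sub (betaNumber_strictAnti μ k (Fin.rev_lt_rev.2 (mem_Ioi.1 hr))).le]
  rfl

end BetaNumbers

section HookContentFormula

variable {μ : YoungDiagram} {k : ℕ}

/-- The dual beta-numbers `j + k - μ'_j`.  Together with the beta-numbers for `k` rows they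
enumerate the natural numbers: along the boundary of `μ`, the beta-numbers label the vertical steps
and the dual ones the horizontal steps. -/
def dualBetaNumber (μ : YoungDiagram) (k j : ℕ) : ℕ :=
  j + (k - μ.colLen j)

theorem dualBetaNumber_strictMono (μ : YoungDiagram) (k : ℕ) : StrictMono (dualBetaNumber μ k) :=
  fun j j' h => add_lt_add_of_lt_of_le h (Nat.sub_le_sub_left (μ.colLen_anti j j' h.le) k)

theorem dualBetaNumber_lt_betaNumber {i : Fin k} {j : ℕ} (h : (↑i, j) ∈ μ) :
    dualBetaNumber μ k j < betaNumber μ k i := by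
  have := mem_iff_lt_rowLen.1 h
  have := mem_iff_lt_colLen.1 h
  simp only [dualBetaNumber, betaNumber, Fin.val_rev]
  lia

theorem betaNumber_lt_dualBetaNumber {i : Fin k} {j : ℕ} (h : (↑i, j) ∉ μ) :
    betaNumber μ k i < dualBetaNumber μ k j := by
  have := mt mem_iff_lt_rowLen.2 h
  have := mt mem_iff_lt_colLen.2 h
  simp only [dualBetaNumber, betaNumber, Fin.val_rev]
  lia

theorem betaNumber_ne_dualBetaNumber (μ : YoungDiagram) (i : Fin k) (j : ℕ) :
    betaNumber μ k i ≠ dualBetaNumber μ k j := by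
  by_cases h : (↑i, j) ∈ μ
  · exact (dualBetaNumber_lt_betaNumber h).ne'
  · exact (betaNumber_lt_dualBetaNumber h).ne

theorem disjoint_image_betaNumber_image_dualBetaNumber (μ : YoungDiagram) (s : Finset (Fin k))
    (t : Finset ℕ) : Disjoint (s.image (betaNumber μ k)) (t.image (dualBetaNumber μ k)) := by
  simp only [disjoint_left, mem_image]
  rintro _ ⟨r, -, rfl⟩ ⟨j, -, h⟩
  exact betaNumber_ne_dualBetaNumber μ r j h.symm

theorem image_betaNumber_union_image_dualBetaNumber (μ : YoungDiagram) (i : Fin k) :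
    (Ioi i).image (betaNumber μ k) ∪ (range (μ.rowLen i)).image (dualBetaNumber μ k)
      = range (betaNumber μ k i) := by
  refine eq_of_subset_of_card_le (union_subset ?_ ?_) ?_
  · refine image_subset_iff.2 fun r hr => mem_range.2 ?_
    exact betaNumber_strictAnti μ k (mem_Ioi.1 hr)
  · refine image_subset_iff.2 fun j hj => mem_range.2 ?_
    exact dualBetaNumber_lt_betaNumber (mem_iff_lt_rowLen.2 (mem_range.1 hj))
  · rw [card_union_of_disjoint (disjoint_image_betaNumber_image_dualBetaNumber μ _ _),
      card_image_of_injective _ (betaNumber_strictAnti μ k).injective,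
      card_image_of_injective _ (dualBetaNumber_strictMono μ k).injective,
      card_range, card_range, Fin.card_Ioi, betaNumber, Fin.val_rev]
    lia

theorem hookLength_eq_betaNumber_sub (hμ : μ.colLen 0 ≤ k) {i : Fin k} {j : ℕ}
    (h : (↑i, j) ∈ μ) : hookLength μ (i, j) = betaNumber μ k i - dualBetaNumber μ k j := by
  have := mem_iff_lt_rowLen.1 h
  have := mem_iff_lt_colLen.1 h
  have := μ.colLen_anti 0 j j.zero_le
  simp only [hookLength, dualBetaNumber, betaNumber, Fin.val_rev]
  lia

theorem prod_hookLength_row_mul (hμ : μ.colLen 0 ≤ k) (i : Fin k) :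
    (∏ j ∈ range (μ.rowLen i), hookLength μ (i, j))
        * ∏ r ∈ Ioi i, (betaNumber μ k i - betaNumber μ k r)
      = (betaNumber μ k i).factorial := by
  set b := betaNumber μ k i with hb
  calc _ = (∏ r ∈ Ioi i, (b - betaNumber μ k r))
            * ∏ j ∈ range (μ.rowLen i), (b - dualBetaNumber μ k j) := by
        rw [mul_comm]
        congr 1
        exact prod_congr rfl fun j hj =>
          hookLength_eq_betaNumber_sub hμ (mem_iff_lt_rowLen.2 (mem_range.1 hj))
    _ = ∏ x ∈ range b, (b - x) := by
        rw [hb, ← image_betaNumber_union_image_dualBetaNumber,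
          prod_union (disjoint_image_betaNumber_image_dualBetaNumber μ _ _),
          prod_image (betaNumber_strictAnti μ k).injective.injOn,
          prod_image (dualBetaNumber_strictMono μ k).injective.injOn]
    _ = b.factorial := by rw [← Nat.descFactorial_eq_prod_range, Nat.descFactorial_self]

theorem hookProd_mul_betaVandermonde (hμ : μ.colLen 0 ≤ k) :
    hookProd μ * betaVandermonde μ k = ∏ i, (betaNumber μ k i).factorial := by
  rw [hookProd, betaVandermonde, prod_cells_eq_prod_rows hμ, ← prod_mul_distrib]
  exact prod_congr rfl fun i _ => prod_hookLength_row_mul hμ i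

theorem factorial_mul_prod_content_row (μ : YoungDiagram) (i : Fin k) :
    ((i.rev : ℕ).factorial : ℤ) * ∏ j ∈ range (μ.rowLen i), ((k : ℤ) + j - i)
      = (betaNumber μ k i).factorial := by
  rw [betaNumber, add_comm, ← Nat.factorial_mul_ascFactorial, Nat.ascFactorial_eq_prod_range]
  push_cast
  congr 1
  refine prod_congr rfl fun j _ => ?_
  rw [Fin.val_rev]
  lia

theorem prod_factorial_mul_prod_content (hμ : μ.colLen 0 ≤ k) :
    (∏ i : Fin k, ((i : ℕ).factorial : ℤ)) * ∏ c ∈ μ.cells, ((k : ℤ) + c.2 - c.1)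
      = ∏ i, ((betaNumber μ k i).factorial : ℤ) := by
  rw [prod_cells_eq_prod_rows hμ, ← Equiv.prod_comp Fin.revPerm, ← prod_mul_distrib]
  exact prod_congr rfl fun i _ => factorial_mul_prod_content_row μ i

theorem prod_factorial_ne_zero (k : ℕ) : ∏ i : Fin k, (i : ℕ).factorial ≠ 0 :=
  prod_ne_zero_iff.2 fun i _ => Nat.factorial_ne_zero i

theorem ssytCount_mul_hookProd (μ : YoungDiagram) (k : ℕ) :
    (ssytCount μ k * hookProd μ : ℤ) = ∏ c ∈ μ.cells, ((k : ℤ) + c.2 - c.1) := by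
  rcases lt_or_ge k (μ.colLen 0) with hμ | hμ
  · have hk : (k, 0) ∈ μ.cells := (mem_cells _).2 (mem_iff_lt_colLen.2 hμ)
    rw [ssytCount_eq_zero hμ, prod_eq_zero hk (by simp), Nat.cast_zero, zero_mul]
  · have factorials_ne_zero : (∏ i : Fin k, ((i : ℕ).factorial : ℤ)) ≠ 0 :=
      mod_cast prod_factorial_ne_zero k
    refine mul_left_cancel₀ factorials_ne_zero ?_
    rw [prod_factorial_mul_prod_content hμ, ← mul_assoc]
    exact mod_cast by
      rw [prod_factorial_mul_ssytCount hμ, mul_comm, hookProd_mul_betaVandermonde hμ]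

theorem hookProd_ne_zero (μ : YoungDiagram) : hookProd μ ≠ 0 := by
  refine prod_ne_zero_iff.2 fun c hc => ?_
  have := mem_iff_lt_rowLen.1 ((mem_cells c).1 hc)
  have := mem_iff_lt_colLen.1 ((mem_cells c).1 hc)
  rw [hookLength]
  lia

theorem hookProd_transpose (μ : YoungDiagram) : hookProd μ.transpose = hookProd μ := by
  rw [hookProd, prod_cells_transpose]
  exact prod_congr rfl fun c _ => by simp [hookLength, add_comm]

end HookContentFormula

section Complement

variable {m n i j : ℕ} {μ : YoungDiagram}

theorem mem_rect : (i, j) ∈ rect m n ↔ i < m ∧ j < n := by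
  rw [← mem_cells, rect, mem_product, mem_range, mem_range]

theorem colLen_zero_le_of_le_rect (hμ : μ ≤ rect m n) : μ.colLen 0 ≤ m :=
  le_of_forall_lt fun _ hi => (mem_rect.1 (hμ (mem_iff_lt_colLen.2 hi))).1

theorem rowLen_le_of_le_rect (hμ : μ ≤ rect m n) (i : ℕ) : μ.rowLen i ≤ n :=
  le_of_forall_lt fun _ hj => (mem_rect.1 (hμ (mem_iff_lt_rowLen.2 hj))).2

theorem transpose_le_rect (hμ : μ ≤ rect m n) : μ.transpose ≤ rect n m :=
  fun _ hc => mem_rect.2 (mem_rect.1 (hμ (mem_transpose.1 hc))).symm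

theorem mem_complement :
    (i, j) ∈ complement m n μ ↔ (i < m ∧ j < n) ∧ (m - 1 - i, n - 1 - j) ∉ μ := by
  rw [← mem_cells, mem_iff_lt_rowLen]
  simp only [complement, mem_filter, mem_product, mem_range]
  lia

theorem complement_le_rect (m n : ℕ) (μ : YoungDiagram) : complement m n μ ≤ rect m n :=
  fun _ hc => mem_rect.2 (mem_complement.1 hc).1

theorem complement_bot (m n : ℕ) : complement m n ⊥ = rect m n := by
  ext ⟨i, j⟩
  simp [mem_complement, mem_rect]

theorem complement_transpose (m n : ℕ) (μ : YoungDiagram) :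
    complement n m μ.transpose = (complement m n μ).transpose := by
  ext ⟨i, j⟩
  simp [mem_complement, and_comm]

theorem rowLen_complement (hi : i < m) :
    (complement m n μ).rowLen i = n - μ.rowLen (m - 1 - i) := by
  refine rowLen_eq_iff.2 fun j => ?_
  rw [mem_complement, mem_iff_lt_rowLen]
  lia

theorem betaNumber_complement_add (hμ : μ ≤ rect m n) (i : Fin m) :
    betaNumber (complement m n μ) m i + betaNumber μ m i.rev = n + (m - 1) := by
  have := rowLen_le_of_le_rect hμ i.rev
  have rev_eq : (i.rev : ℕ) = m - 1 - i := by rw [Fin.val_rev]; lia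
  rw [betaNumber, betaNumber, rowLen_complement i.2, Fin.rev_rev, ← rev_eq]
  lia

theorem betaVandermonde_complement (hμ : μ ≤ rect m n) :
    betaVandermonde (complement m n μ) m = betaVandermonde μ m := by
  rw [betaVandermonde, betaVandermonde,
    ← prod_prod_Ioi_rev fun i r => betaNumber μ m i - betaNumber μ m r]
  refine prod_congr rfl fun i _ => prod_congr rfl fun r _ => ?_
  have := betaNumber_complement_add hμ i
  have := betaNumber_complement_add hμ r
  lia

theorem ssytCount_complement (hμ : μ ≤ rect m n) :
    ssytCount (complement m n μ) m = ssytCount μ m := by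
  refine mul_left_cancel₀ (prod_factorial_ne_zero m) ?_
  rw [prod_factorial_mul_ssytCount (colLen_zero_le_of_le_rect hμ),
    prod_factorial_mul_ssytCount (colLen_zero_le_of_le_rect (complement_le_rect m n μ)),
    betaVandermonde_complement hμ]

theorem prod_cells_complement {M : Type*} [CommMonoid M] (f : ℕ × ℕ → M) :
    ∏ c ∈ (complement m n μ).cells, f c
      = ∏ c ∈ (rect m n).cells \ μ.cells, f (m - 1 - c.1, n - 1 - c.2) := by
  have rotate_rotate {c : ℕ × ℕ} (hc : c.1 < m ∧ c.2 < n) :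
      (m - 1 - (m - 1 - c.1), n - 1 - (n - 1 - c.2)) = c := by
    ext <;> lia
  refine prod_nbij' (fun c => (m - 1 - c.1, n - 1 - c.2)) (fun c => (m - 1 - c.1, n - 1 - c.2))
    ?_ ?_ ?_ ?_ ?_
  · intro c hc
    have hc := mem_complement.1 ((mem_cells c).1 hc)
    exact mem_sdiff.2 ⟨(mem_cells _).2 (mem_rect.2 (by lia)), fun h => hc.2 ((mem_cells _).1 h)⟩
  · intro c hc
    obtain ⟨hrect, hμ⟩ := mem_sdiff.1 hc
    have hrect := mem_rect.1 ((mem_cells c).1 hrect)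
    refine (mem_cells _).2 (mem_complement.2 ⟨by lia, ?_⟩)
    rwa [rotate_rotate hrect, ← mem_cells]
  · exact fun c hc => rotate_rotate (mem_complement.1 ((mem_cells c).1 hc)).1
  · exact fun c hc => rotate_rotate (mem_rect.1 ((mem_cells c).1 (mem_sdiff.1 hc).1))
  · exact fun c hc =>
      congrArg f (rotate_rotate (mem_complement.1 ((mem_cells c).1 hc)).1).symm

theorem ssytCount_transpose_mul_hookProd_complement (hμ : μ ≤ rect m n) :
    (ssytCount μ.transpose n * hookProd (complement m n μ) : ℤ)
      = ∏ c ∈ (rect m n).cells \ μ.cells, ((m : ℤ) + c.2 - c.1) := by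
  rw [← ssytCount_complement (transpose_le_rect hμ), complement_transpose, ← hookProd_transpose,
    ssytCount_mul_hookProd, prod_cells_transpose, prod_cells_complement]
  refine prod_congr rfl fun c hc => ?_
  have hc := mem_rect.1 ((mem_cells c).1 (mem_sdiff.1 hc).1)
  simp only [Prod.fst_swap, Prod.snd_swap]
  lia

theorem hookProd_rect (m n : ℕ) :
    (hookProd (rect m n) : ℤ) = ∏ c ∈ (rect m n).cells, ((m : ℤ) + c.2 - c.1) := by
  have ssytCount_rect : ssytCount (rect m n) m = 1 := by
    rw [← complement_bot, ssytCount_complement bot_le, ssytCount_bot]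
  rw [← ssytCount_mul_hookProd, ssytCount_rect, Nat.cast_one, one_mul]

end Complement

end HookContent

/-- hook–content computation:
`s_λ(1^m)·s_{λ'}(1^n) = (∏_{□∈λ}(m+c(□)))·(∏_{□∈n^m∖λ}(m+c(□)))/(H_λ H_λ̄) = H_{n^m}/(H_λ H_λ̄)`,
contents in the second product taken in the coordinates of the rectangle. -/
theorem ssyt_product_hook_content (m n p : ℕ) (μ : YoungDiagram)
    (hμ : μ ≤ rect m n) (hp : μ.card = p) :
    ((ssytCount μ m * ssytCount μ.transpose n : ℚ)
        = (∏ c ∈ μ.cells, ((m : ℚ) + c.2 - c.1))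
            * (∏ c ∈ (rect m n).cells \ μ.cells, ((m : ℚ) + c.2 - c.1))
            / (hookProd μ * hookProd (complement m n μ))) ∧
    (ssytCount μ m * ssytCount μ.transpose n : ℚ)
        = (hookProd (rect m n) : ℚ) / (hookProd μ * hookProd (complement m n μ)) := by
  have hook_content : (ssytCount μ m * hookProd μ : ℚ) = ∏ c ∈ μ.cells, ((m : ℚ) + c.2 - c.1) :=
    mod_cast HookContent.ssytCount_mul_hookProd μ m
  have hook_content_complement : (ssytCount μ.transpose n * hookProd (complement m n μ) : ℚ)
      = ∏ c ∈ (rect m n).cells \ μ.cells, ((m : ℚ) + c.2 - c.1) :=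
    mod_cast HookContent.ssytCount_transpose_mul_hookProd_complement hμ
  have hookProd_rect : (hookProd (rect m n) : ℚ)
      = (∏ c ∈ μ.cells, ((m : ℚ) + c.2 - c.1))
        * ∏ c ∈ (rect m n).cells \ μ.cells, ((m : ℚ) + c.2 - c.1) := by
    rw [mul_comm, prod_sdiff (cells_subset_iff.2 hμ)]
    exact mod_cast HookContent.hookProd_rect m n
  have hooks_ne_zero : (hookProd μ * hookProd (complement m n μ) : ℚ) ≠ 0 :=
    mod_cast mul_ne_zero (HookContent.hookProd_ne_zero μ) (HookContent.hookProd_ne_zero _)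
  rw [hookProd_rect, and_self, eq_div_iff hooks_ne_zero, ← hook_content, ← hook_content_complement]
  ring
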